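/- Let M₁ and M₂ be Dieudonné modules over Γ and over 𝓔_+, respectively, such that M₁⊗_Γ 𝓔 and M₂⊗_{𝓔_+} 𝓔 are isomorphic as Dieudonné modules over 𝓔. Then there is a Dieudonné module M_+ over Γ_+ such that M₁ is isomorphic to M_+⊗_{Γ_+}Γ as Dieudonné modules over Γ, and M₂ is isomorphic to M_+⊗_{Γ_+}𝓔_+ as Dieudonné modules over 𝓔_+. -/

import Mathlib

/-!
STATEMENT 5: Let `M₁` and `M₂` be Dieudonné modules over `Γ` and over
`𝓔_+ = Γ_+[1/p]` respectively, such that `M₁⊗_Γ 𝓔` and `M₂⊗_{𝓔_+} 𝓔` are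
isomorphic Dieudonné modules over `𝓔 = Γ[1/p]`.  Then there is a Dieudonné
module `M_+` over `Γ_+ = 𝒪[[u]]` with `M₁ ≅ M_+⊗_{Γ_+}Γ` over `Γ` and
`M₂ ≅ M_+⊗_{Γ_+}𝓔_+` over `𝓔_+`.

Here `𝒪 = W(k)`, `Γ` is the `p`-adic completion of `𝒪((u))`, `f = 1` (so
`q = p`), and `σ` is the Frobenius lift `Σ x_i u^i ↦ Σ σ₀(x_i) u^{ip}` with
`d` the formal derivative in `u`.  Since all the modules involved are finite
free, we state everything concretely in terms of matrices in fixed bases: a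
Dieudonné module of rank `n` over a subring `A ⊆ 𝓔` is given by matrices
`Φ, B, N` with entries in `A` (Frobenius, Verschiebung, connection) satisfying
`Φ·B = B·Φ = p·1`, the `(F,∇)`-compatibility `dΦ + N·Φ = c·(Φ·σ(N))` and the
`(V,∇)`-compatibility `dB + c·(σ(N)·B) = B·N`, where `c = dσ(u)/du = p·u^{p−1}`;
a (iso)morphism is given by an (invertible) matrix `P` over `A` with
`P·Φ = Φ'·σ(P)`, `dP + N'·P = P·N` (and then automatically `B'·P = σ(P)·B`).
-/

set_option synthInstance.maxHeartbeats 1000000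
set_option maxHeartbeats 4000000

noncomputable section

/-- `Γ`: the `p`-adic completion of the Laurent series ring `𝒪((u))`, `𝒪 = W(k)`. -/
abbrev GammaRing (p : ℕ) [Fact p.Prime] (k : Type*) [Field k] [CharP k p] : Type _ :=
  AdicCompletion (Ideal.span {(p : LaurentSeries (WittVector p k))})
    (LaurentSeries (WittVector p k))

/-- `𝓔 = Γ[1/p]`, the fraction field of `Γ`. -/
abbrev ERing (p : ℕ) [Fact p.Prime] (k : Type*) [Field k] [CharP k p] : Type _ :=
  FractionRing (GammaRing p k)

/-- The canonical map `Γ → 𝓔`. -/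
abbrev gammaToE (p : ℕ) [Fact p.Prime] (k : Type*) [Field k] [CharP k p] :
    GammaRing p k →+* ERing p k :=
  algebraMap (GammaRing p k) (ERing p k)

/-- The canonical map `𝒪((u)) → 𝓔`. -/
abbrev laurentToE (p : ℕ) [Fact p.Prime] (k : Type*) [Field k] [CharP k p] :
    LaurentSeries (WittVector p k) →+* ERing p k :=
  (gammaToE p k).comp (algebraMap (LaurentSeries (WittVector p k)) (GammaRing p k))

/-- The canonical map `Γ_+ = 𝒪[[u]] → 𝓔`. -/
abbrev psToE (p : ℕ) [Fact p.Prime] (k : Type*) [Field k] [CharP k p] :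
    PowerSeries (WittVector p k) →+* ERing p k :=
  (laurentToE p k).comp (HahnSeries.ofPowerSeries ℤ (WittVector p k))

/-- The canonical map `𝒪 → 𝓔` (constant series). -/
abbrev wittToE (p : ℕ) [Fact p.Prime] (k : Type*) [Field k] [CharP k p] :
    WittVector p k →+* ERing p k :=
  (laurentToE p k).comp (HahnSeries.C : WittVector p k →+* LaurentSeries (WittVector p k))

/-- The element `u` of `𝓔`. -/
def uE (p : ℕ) [Fact p.Prime] (k : Type*) [Field k] [CharP k p] : ERing p k :=
  laurentToE p k (HahnSeries.single (1 : ℤ) (1 : WittVector p k))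

/-- The image of `Γ` in `𝓔`. -/
def GammaSet (p : ℕ) [Fact p.Prime] (k : Type*) [Field k] [CharP k p] :
    Set (ERing p k) :=
  Set.range (gammaToE p k)

/-- The image of `Γ_+ = 𝒪[[u]]` in `𝓔`. -/
def GammaPlusSet (p : ℕ) [Fact p.Prime] (k : Type*) [Field k] [CharP k p] :
    Set (ERing p k) :=
  Set.range (psToE p k)

/-- `𝓔_+ = Γ_+[1/p]` inside `𝓔`. -/
def EPlusSet (p : ℕ) [Fact p.Prime] (k : Type*) [Field k] [CharP k p] :
    Set (ERing p k) :=
  {x | ∃ (g : PowerSeries (WittVector p k)) (j : ℕ), (p : ERing p k) ^ j * x = psToE p k g}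

/-!
Let `X ∈ GL_n(𝓔)` be the matrix of the isomorphism. The ring `Γ` is a discrete valuation ring with
uniformizer `p` and residue field `k((u))`, so after scaling by a power of `p` the matrix `X` has
entries in `Γ` and nonzero determinant. While the determinant is divisible by `p`, the rows of `X`
satisfy a linear relation over `k((u))`. Dividing by a coefficient of least order in `u` gives a
relation over `k[[u]]` in which one coefficient is `1`; it lifts to `𝒪[[u]]`, and the corresponding
row operation followed by division of that row by `p` is a matrix in `GL_n(𝓔_+)` which lowers the
valuation of the determinant. Hence `Z * X = Y` with `Z ∈ GL_n(𝓔_+)` and `Y ∈ GL_n(Γ)`.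

Transporting `M₂` along `Z` and `M₁` along `Y` gives one and the same Dieudonné module over `𝓔`,
whose matrices have entries in both `𝓔_+` and `Γ`, hence in `𝓔_+ ∩ Γ = Γ_+`. Horizontality of `F`
and `V` survives the change of basis `Z` because `d ∘ σ = c · σ ∘ d` on `𝓔_+`. On `Γ_+` this holds
because the difference of the two sides is a derivation along `σ` which kills `u` and the constants,
so that all its values are divisible by every power of `u`.
-/

open scoped nonZeroDivisors MatrixGroups

section PrincipalAdic

variable {A : Type*} [CommRing A] {π : A}

theorem isHausdorff_span_singleton_iff :
    IsHausdorff (Ideal.span {π}) A ↔ ∀ x : A, (∀ n : ℕ, π ^ n ∣ x) → x = 0 := by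
  simp only [isHausdorff_iff, SModEq.zero, smul_eq_mul, Ideal.mul_top, Ideal.span_singleton_pow,
    Ideal.mem_span_singleton]

variable [IsAdicComplete (Ideal.span {π}) A]

theorem isUnit_of_not_dvd_of_isMaximal_span [(Ideal.span {π}).IsMaximal] {x : A} (hx : ¬π ∣ x) :
    IsUnit x := by
  have : IsLocalRing A := isLocalRing_of_isAdicComplete_maximal (Ideal.span {π})
  rwa [← IsLocalRing.notMem_maximalIdeal, ← IsLocalRing.eq_maximalIdeal ‹_›,
    Ideal.mem_span_singleton]

theorem exists_eq_pow_mul_unit_of_isMaximal_span [(Ideal.span {π}).IsMaximal] {x : A}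
    (hx : x ≠ 0) : ∃ (n : ℕ) (u : Aˣ), x = π ^ n * u := by
  have hfin : FiniteMultiplicity π x := by
    by_contra h
    exact hx (isHausdorff_span_singleton_iff.1 inferInstance x
      (FiniteMultiplicity.not_iff_forall.1 h))
  obtain ⟨y, hxy, hy⟩ := hfin.exists_eq_pow_mul_and_not_dvd
  exact ⟨_, (isUnit_of_not_dvd_of_isMaximal_span hy).unit, hxy⟩

theorem isDomain_of_isMaximal_span [hmax : (Ideal.span {π}).IsMaximal] (hπ : π ∈ A⁰) :
    IsDomain A := by
  have : Nontrivial A :=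
    not_subsingleton_iff_nontrivial.1 fun _ => hmax.ne_top (Subsingleton.elim _ _)
  have : NoZeroDivisors A := by
    refine ⟨fun {x y} hxy => ?_⟩
    by_contra! hne
    obtain ⟨m, u, rfl⟩ := exists_eq_pow_mul_unit_of_isMaximal_span (π := π) hne.1
    obtain ⟨n, v, rfl⟩ := exists_eq_pow_mul_unit_of_isMaximal_span (π := π) hne.2
    have huv : (u * v : A) = 0 := by
      refine (mem_nonZeroDivisors_iff.1 (pow_mem hπ (m + n))).1 _ ?_
      rw [← hxy]
      ring
    exact (u * v).ne_zero (by rwa [Units.val_mul])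
  exact NoZeroDivisors.to_isDomain A

theorem irreducible_of_isMaximal_span [IsDomain A] [(Ideal.span {π}).IsMaximal] (hπ : π ≠ 0) :
    Irreducible π :=
  have : IsLocalRing A := isLocalRing_of_isAdicComplete_maximal (Ideal.span {π})
  IsDiscreteValuationRing.irreducible_of_span_eq_maximalIdeal π hπ
    (IsLocalRing.eq_maximalIdeal ‹_›).symm

theorem isDiscreteValuationRing_of_isMaximal_span [IsDomain A] [(Ideal.span {π}).IsMaximal]
    (hπ : π ≠ 0) : IsDiscreteValuationRing A :=
  .ofHasUnitMulPowIrreducibleFactorization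
    ⟨π, irreducible_of_isMaximal_span hπ, fun hx =>
      let ⟨n, u, hu⟩ := exists_eq_pow_mul_unit_of_isMaximal_span hx
      ⟨n, u, hu.symm⟩⟩

end PrincipalAdic

section AdicCompletion

open AdicCompletion (eval evalₐ)

variable {R : Type*} [CommRing R] {π : R}

theorem evalₐ_span_singleton_eq_zero_iff {n : ℕ} {x : AdicCompletion (Ideal.span {π}) R} :
    evalₐ (Ideal.span {π}) n x = 0 ↔ algebraMap R _ π ^ n ∣ x := by
  have hker : evalₐ (Ideal.span {π}) n x = 0 ↔ x ∈ (eval (Ideal.span {π}) R n).ker := by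
    rw [LinearMap.mem_ker]
    refine ⟨fun h => ?_, fun h => ?_⟩
    · rw [← AdicCompletion.factor_evalₐ_eq_eval _ x (by simp), h, _root_.map_zero]
    · rw [← AdicCompletion.factor_eval_eq_evalₐ _ x (by simp), h, _root_.map_zero]
  rw [hker, ← AdicCompletion.pow_smul_top_eq_ker_eval (Submodule.fg_span_singleton π),
    Ideal.span_singleton_pow, Submodule.ideal_span_singleton_smul]
  simp only [Submodule.mem_smul_pointwise_iff_exists, Submodule.mem_top, true_and,
    Algebra.smul_def, map_pow, dvd_def, eq_comm]

theorem algebraMap_pow_dvd_algebraMap_iff {n : ℕ} {x : R} :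
    algebraMap R (AdicCompletion (Ideal.span {π}) R) π ^ n ∣ algebraMap R _ x ↔ π ^ n ∣ x := by
  rw [← evalₐ_span_singleton_eq_zero_iff, AlgHom.commutes, Ideal.Quotient.algebraMap_eq,
    Ideal.Quotient.eq_zero_iff_mem, Ideal.span_singleton_pow, Ideal.mem_span_singleton]

theorem exists_algebraMap_pow_dvd_sub (n : ℕ) (x : AdicCompletion (Ideal.span {π}) R) :
    ∃ r : R, algebraMap R _ π ^ n ∣ x - algebraMap R _ r := by
  obtain ⟨r, hr⟩ := Ideal.Quotient.mk_surjective (evalₐ (Ideal.span {π}) n x)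
  refine ⟨r, ?_⟩
  rw [← evalₐ_span_singleton_eq_zero_iff, map_sub, AlgHom.commutes, Ideal.Quotient.algebraMap_eq,
    hr, sub_self]

instance isAdicComplete_span_algebraMap :
    IsAdicComplete (Ideal.span {algebraMap R (AdicCompletion (Ideal.span {π}) R) π})
      (AdicCompletion (Ideal.span {π}) R) := by
  simpa only [Ideal.map_span, Set.image_singleton] using
    AdicCompletion.isAdicComplete_self (Ideal.span {π}) (Submodule.fg_span_singleton π)

instance isMaximal_span_algebraMap [(Ideal.span {π}).IsMaximal] :
    (Ideal.span {algebraMap R (AdicCompletion (Ideal.span {π}) R) π}).IsMaximal := by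
  simpa only [Ideal.map_span, Set.image_singleton] using
    AdicCompletion.isMaximal_map_of_le (Ideal.span {π}) _ le_rfl (Submodule.fg_span_singleton π)

theorem algebraMap_mem_nonZeroDivisors (hπ : π ∈ R⁰) :
    algebraMap R (AdicCompletion (Ideal.span {π}) R) π ∈ (AdicCompletion (Ideal.span {π}) R)⁰ := by
  refine mem_nonZeroDivisors_iff_left.2 fun x hx => ?_
  refine isHausdorff_span_singleton_iff.1 (isAdicComplete_span_algebraMap (π := π)).toIsHausdorff x
    fun n => ?_
  obtain ⟨r, hr⟩ := exists_algebraMap_pow_dvd_sub (π := π) (n + 1) x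
  have hπr : π ^ (n + 1) ∣ π * r := by
    rw [← algebraMap_pow_dvd_algebraMap_iff, ← dvd_neg, map_mul]
    convert hr.mul_left (algebraMap R _ π) using 1
    rw [mul_sub, hx, zero_sub]
  rw [pow_succ', dvd_cancel_left_mem_nonZeroDivisors hπ, ← algebraMap_pow_dvd_algebraMap_iff]
    at hπr
  exact (dvd_iff_dvd_of_dvd_sub ((pow_dvd_pow _ n.le_succ).trans hr)).2 hπr

end AdicCompletion

section CoefficientRings

variable {Γ R S : Type*} [AddCommMonoid Γ] [PartialOrder Γ] [IsOrderedCancelAddMonoid Γ]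

/-- The ring homomorphism of Hahn series rings that applies a ring homomorphism to every
coefficient; for `W(k) → k` it is the reduction modulo `p` of Laurent series. -/
def hahnSeriesMap [Semiring R] [Semiring S] (f : R →+* S) : HahnSeries Γ R →+* HahnSeries Γ S where
  toFun x := x.map f
  map_one' := HahnSeries.map_one f.toMonoidWithZeroHom
  map_mul' _ _ := HahnSeries.map_mul f.toNonUnitalRingHom
  map_zero' := by ext; simp
  map_add' _ _ := HahnSeries.map_add f.toAddMonoidHom

@[simp]
theorem hahnSeriesMap_coeff [Semiring R] [Semiring S] (f : R →+* S) (x : HahnSeries Γ R) (i : Γ) :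
    (hahnSeriesMap f x).coeff i = f (x.coeff i) :=
  rfl

theorem hahnSeriesMap_surjective [Semiring R] [Semiring S] {f : R →+* S}
    (hf : Function.Surjective f) :
    Function.Surjective (hahnSeriesMap f : HahnSeries Γ R → HahnSeries Γ S) := by
  classical
  intro y
  refine ⟨⟨fun i => if y.coeff i = 0 then 0 else Function.surjInv hf (y.coeff i),
    y.isPWO_support.mono fun i hi h0 => hi (if_pos h0)⟩, ?_⟩
  ext i
  by_cases h0 : y.coeff i = 0 <;> simp [h0, Function.surjInv_eq hf]

variable [CommRing R] {a : R}

theorem C_dvd_hahnSeries_iff {x : HahnSeries Γ R} :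
    HahnSeries.C a ∣ x ↔ ∀ i, a ∣ x.coeff i := by
  classical
  refine ⟨?_, fun h => ?_⟩
  · rintro ⟨y, rfl⟩ i
    rw [HahnSeries.C_mul_eq_smul, HahnSeries.coeff_smul, smul_eq_mul]
    exact dvd_mul_right _ _
  · choose b hb using h
    refine ⟨⟨fun i => if x.coeff i = 0 then 0 else b i,
      x.isPWO_support.mono fun i hi h0 => hi (if_pos h0)⟩, ?_⟩
    ext i
    rw [HahnSeries.C_mul_eq_smul, HahnSeries.coeff_smul, smul_eq_mul]
    by_cases h0 : x.coeff i = 0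
    · simp [h0]
    · simp [h0, ← hb]

theorem C_dvd_powerSeries_iff {f : PowerSeries R} :
    PowerSeries.C a ∣ f ↔ ∀ n, a ∣ PowerSeries.coeff n f := by
  refine ⟨?_, fun h => ?_⟩
  · rintro ⟨g, rfl⟩ n
    rw [PowerSeries.coeff_C_mul]
    exact dvd_mul_right _ _
  · choose b hb using h
    exact ⟨PowerSeries.mk b, by ext n; rw [PowerSeries.coeff_C_mul, PowerSeries.coeff_mk, hb]⟩

theorem C_dvd_of_C_dvd_ofPowerSeries {f : PowerSeries R}
    (h : HahnSeries.C a ∣ HahnSeries.ofPowerSeries ℤ R f) : PowerSeries.C a ∣ f :=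
  C_dvd_powerSeries_iff.2 fun n => by
    simpa only [HahnSeries.ofPowerSeries_apply_coeff] using C_dvd_hahnSeries_iff.1 h n

theorem isHausdorff_span_hahnSeries_C [IsHausdorff (Ideal.span {a}) R] :
    IsHausdorff (Ideal.span {(HahnSeries.C a : HahnSeries Γ R)}) (HahnSeries Γ R) := by
  refine isHausdorff_span_singleton_iff.2 fun x hx => HahnSeries.ext (funext fun i => ?_)
  refine isHausdorff_span_singleton_iff.1 ‹_› _ fun n => ?_
  exact C_dvd_hahnSeries_iff.1 (by simpa only [map_pow] using hx n) i

theorem ker_hahnSeriesMap [CommRing S] {f : R →+* S} (hf : RingHom.ker f = Ideal.span {a}) :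
    RingHom.ker (hahnSeriesMap f : HahnSeries Γ R →+* HahnSeries Γ S) =
      Ideal.span {HahnSeries.C a} := by
  ext x
  rw [Ideal.mem_span_singleton, C_dvd_hahnSeries_iff, RingHom.mem_ker, HahnSeries.ext_iff,
    funext_iff]
  refine forall_congr' fun i => ?_
  rw [hahnSeriesMap_coeff, HahnSeries.coeff_zero, ← Ideal.mem_span_singleton, ← hf,
    RingHom.mem_ker]

theorem hahnSeriesMap_ofPowerSeries [CommRing S] (f : R →+* S) (g : PowerSeries R) :
    hahnSeriesMap f (HahnSeries.ofPowerSeries ℤ R g) =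
      HahnSeries.ofPowerSeries ℤ S (PowerSeries.map f g) := by
  ext i
  rw [hahnSeriesMap_coeff, PowerSeries.coeff_coe, PowerSeries.coeff_coe]
  split_ifs
  · exact map_zero f
  · rw [PowerSeries.coeff_map]

end CoefficientRings

section RowReduction

theorem exists_div_mem_range_algebraMap (O : Type*) {L ι : Type*} [CommRing O] [IsDomain O]
    [ValuationRing O] [Field L] [Algebra O L] [IsFractionRing O L] [Finite ι] {w : ι → L}
    (hw : w ≠ 0) : ∃ i₀, w i₀ ≠ 0 ∧ ∀ i, w i / w i₀ ∈ (algebraMap O L).range := by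
  obtain ⟨i₁, hi₁⟩ := Function.ne_iff.1 hw
  have : Nonempty ι := ⟨i₁⟩
  obtain ⟨i₀, hmax⟩ := Finite.exists_max fun i => ValuationRing.valuation O L (w i)
  have hi₀ : w i₀ ≠ 0 := fun h₀ => by
    have := hmax i₁
    rw [h₀, map_zero, le_zero_iff, Valuation.zero_iff] at this
    exact hi₁ this
  refine ⟨i₀, hi₀, fun i => (ValuationRing.mem_integer_iff O L _).1 ?_⟩
  rw [Valuation.mem_integer_iff, map_div₀]
  exact div_le_one_of_le₀ (hmax i) zero_le

theorem det_updateRow_vecMul {n R : Type*} [DecidableEq n] [Fintype n] [CommRing R]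
    (X : Matrix n n R) (i : n) (a : n → R) :
    (X.updateRow i (Matrix.vecMul a X)).det = a i * X.det := by
  rw [Matrix.vecMul_eq_sum, Matrix.det_updateRow_sum, smul_eq_mul]

variable {A K L n : Type*} [CommRing A] [IsDomain A] [IsDiscreteValuationRing A] {ϖ : A}
  [CommRing K] [Algebra A K] {S : Subring K} [Field L] {ρ : A →+* L} [IsLocalHom ρ]
  [Fintype n] [DecidableEq n]

theorem dvd_of_map_eq_zero (hϖ : Irreducible ϖ) {x : A} (hx : ρ x = 0) : ϖ ∣ x := by
  rw [← Ideal.mem_span_singleton, ← hϖ.maximalIdeal_eq, IsLocalRing.mem_maximalIdeal,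
    mem_nonunits_iff, ← isUnit_map_iff ρ, hx]
  exact not_isUnit_zero

variable (O : Type*) [CommRing O] [IsDomain O] [ValuationRing O] [Algebra O L]
  [IsFractionRing O L]

theorem exists_vecMul_dvd (hϖ : Irreducible ϖ)
    (hlift : ∀ v : O, ∃ x : A, ρ x = algebraMap O L v ∧ algebraMap A K x ∈ S)
    {X : Matrix n n A} (hX : ¬IsUnit X.det) :
    ∃ (i₀ : n) (a : n → A), a i₀ = 1 ∧ (∀ i, algebraMap A K (a i) ∈ S) ∧
      ∀ j, ϖ ∣ Matrix.vecMul a X j := by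
  have hdet : (X.map ρ).det = 0 := by
    rwa [← RingHom.mapMatrix_apply, ← RingHom.map_det, ← not_ne_iff, ← isUnit_iff_ne_zero,
      isUnit_map_iff]
  obtain ⟨w, hw, hwX⟩ := Matrix.exists_vecMul_eq_zero_iff.2 hdet
  obtain ⟨i₀, hi₀, hwO⟩ := exists_div_mem_range_algebraMap O hw
  have hcoeff (i : n) : ∃ x : A, ρ x = w i / w i₀ ∧ algebraMap A K x ∈ S ∧ (i = i₀ → x = 1) := by
    by_cases hi : i = i₀
    · exact ⟨1, by rw [map_one, hi, div_self hi₀], by rw [map_one]; exact one_mem S, fun _ => rfl⟩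
    · obtain ⟨v, hv⟩ := hwO i
      obtain ⟨x, hx, hxS⟩ := hlift v
      exact ⟨x, hx.trans hv, hxS, fun h => absurd h hi⟩
  choose a haw haS ha₁ using hcoeff
  refine ⟨i₀, a, ha₁ i₀ rfl, haS, fun j => dvd_of_map_eq_zero (ρ := ρ) hϖ ?_⟩
  have ha : ρ ∘ a = (w i₀)⁻¹ • w := funext fun i => by
    rw [Function.comp_apply, haw, Pi.smul_apply, smul_eq_mul, div_eq_inv_mul]
  rw [RingHom.map_vecMul, ha, Matrix.smul_vecMul, hwX, smul_zero, Pi.zero_apply]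

theorem exists_mul_eq_map_det_of_not_isUnit_det (hϖ : Irreducible ϖ) {s : Sˣ}
    (hs : (s : K) = algebraMap A K ϖ)
    (hlift : ∀ v : O, ∃ x : A, ρ x = algebraMap O L v ∧ algebraMap A K x ∈ S)
    {X : Matrix n n A} (hX : ¬IsUnit X.det) :
    ∃ (T : GL n S) (X' : Matrix n n A), ϖ * X'.det = X.det ∧
      S.subtype.mapMatrix T * (algebraMap A K).mapMatrix X = (algebraMap A K).mapMatrix X' := by
  obtain ⟨i₀, a, ha₁, haS, hdvd⟩ := exists_vecMul_dvd (K := K) O hϖ hlift hX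
  choose r hr using hdvd
  have hr' : Matrix.vecMul a X = ϖ • r := funext hr
  let a' : n → S := fun i => ⟨algebraMap A K (a i), haS i⟩
  have ha'₁ : a' i₀ = 1 := Subtype.ext (by simp [a', ha₁])
  let T : Matrix n n S := (1 : Matrix n n S).updateRow i₀ ((↑s⁻¹ : S) • a')
  have hT : IsUnit T.det := by
    have hdet := det_updateRow_vecMul (1 : Matrix n n S) i₀ a'
    rw [Matrix.vecMul_one, ha'₁, Matrix.det_one, mul_one] at hdet
    rw [Matrix.det_updateRow_smul, hdet, mul_one]
    exact s⁻¹.isUnit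
  refine ⟨Matrix.GeneralLinearGroup.mk'' T hT, X.updateRow i₀ r, ?_, ?_⟩
  · rw [← Matrix.det_updateRow_smul, ← hr', det_updateRow_vecMul, ha₁, one_mul]
  · have hs_inv : ((s⁻¹ : Sˣ) : K) * algebraMap A K ϖ = 1 := by
      rw [← hs]
      exact congrArg Subtype.val s.inv_mul
    have hTK : S.subtype.mapMatrix T =
        (1 : Matrix n n K).updateRow i₀ (((s⁻¹ : Sˣ) : K) • (algebraMap A K ∘ a)) := by
      rw [RingHom.mapMatrix_apply, Matrix.map_updateRow, Matrix.map_one _ (map_zero _) (map_one _)]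
      rfl
    change S.subtype.mapMatrix T * _ = _
    rw [hTK, Matrix.updateRow_mul, one_mul, Matrix.smul_vecMul, RingHom.mapMatrix_apply,
      RingHom.mapMatrix_apply, Matrix.map_updateRow]
    congr 1
    funext j
    rw [Pi.smul_apply, smul_eq_mul, ← RingHom.map_vecMul, hr, map_mul, ← mul_assoc, hs_inv,
      one_mul, Function.comp_apply]

theorem exists_mul_eq_map_of_det_ne_zero (hϖ : Irreducible ϖ) {s : Sˣ}
    (hs : (s : K) = algebraMap A K ϖ)
    (hlift : ∀ v : O, ∃ x : A, ρ x = algebraMap O L v ∧ algebraMap A K x ∈ S)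
    {X : Matrix n n A} (hX : X.det ≠ 0) :
    ∃ (Z : GL n S) (Y : GL n A),
      S.subtype.mapMatrix Z * (algebraMap A K).mapMatrix X = (algebraMap A K).mapMatrix Y := by
  obtain ⟨m, u, hm⟩ := IsDiscreteValuationRing.eq_unit_mul_pow_irreducible hX hϖ
  induction m generalizing X with
  | zero =>
    have hunit : IsUnit X.det := by rw [hm, pow_zero, mul_one]; exact u.isUnit
    exact ⟨1, Matrix.GeneralLinearGroup.mk'' X hunit, by rw [Units.val_one, map_one, one_mul]; rfl⟩
  | succ m ih =>
    have hnonunit : ¬IsUnit X.det := fun h =>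
      hϖ.not_isUnit (isUnit_of_dvd_unit (hm ▸ (dvd_pow_self ϖ m.succ_ne_zero).mul_left ↑u) h)
    obtain ⟨T, X', hdet, hTX⟩ :=
      exists_mul_eq_map_det_of_not_isUnit_det O hϖ hs hlift hnonunit
    have hX' : X'.det = u * ϖ ^ m := by
      refine mul_left_cancel₀ hϖ.ne_zero ?_
      rw [hdet, hm]
      ring
    obtain ⟨Z, Y, hZY⟩ := ih (by rintro h; rw [h, mul_zero] at hdet; exact hX hdet.symm) hX'
    exact ⟨Z * T, Y, by rw [Units.val_mul, map_mul, mul_assoc, hTX, hZY]⟩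

theorem exists_pow_smul_eq_map [IsFractionRing A K] (hϖ : Irreducible ϖ) (X : Matrix n n K) :
    ∃ (m : ℕ) (X₀ : Matrix n n A),
      algebraMap A K ϖ ^ m • X = (algebraMap A K).mapMatrix X₀ := by
  obtain ⟨b, hb⟩ :=
    IsLocalization.exist_integer_multiples_of_finite A⁰ fun ij : n × n => X ij.1 ij.2
  choose a ha using hb
  obtain ⟨m, u, hm⟩ := IsDiscreteValuationRing.eq_unit_mul_pow_irreducible
    (nonZeroDivisors.ne_zero b.2) hϖ
  refine ⟨m, Matrix.of fun i j => ↑u⁻¹ * a (i, j), ?_⟩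
  ext i j
  have hu : algebraMap A K ↑u⁻¹ * algebraMap A K u = 1 := by
    rw [← map_mul, Units.inv_mul, map_one]
  have hab := ha (i, j)
  rw [Algebra.smul_def, hm, map_mul, map_pow] at hab
  simp only [RingHom.mapMatrix_apply, Matrix.map_apply, Matrix.of_apply, map_mul, hab,
    Matrix.smul_apply, smul_eq_mul]
  linear_combination -(algebraMap A K ϖ ^ m * X i j) * hu

theorem exists_map_mul_eq_map [IsFractionRing A K] (hϖ : Irreducible ϖ) {s : Sˣ}
    (hs : (s : K) = algebraMap A K ϖ)
    (hlift : ∀ v : O, ∃ x : A, ρ x = algebraMap O L v ∧ algebraMap A K x ∈ S) (X : GL n K) :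
    ∃ (Z : GL n S) (Y : GL n A),
      Matrix.GeneralLinearGroup.map S.subtype Z * X =
        Matrix.GeneralLinearGroup.map (algebraMap A K) Y := by
  have : Nontrivial K := (IsFractionRing.injective A K).nontrivial
  obtain ⟨m, X₀, hX₀⟩ := exists_pow_smul_eq_map hϖ (X : Matrix n n K)
  have hdet : X₀.det ≠ 0 := fun h => by
    have hunit : IsUnit ((algebraMap A K).mapMatrix X₀).det := by
      rw [← hX₀, Matrix.det_smul, ← hs]
      exact (((s.isUnit.map S.subtype).pow m).pow _).mul
        ((Matrix.isUnit_iff_isUnit_det _).1 X.isUnit)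
    rw [← RingHom.map_det, h, map_zero] at hunit
    exact not_isUnit_zero hunit
  obtain ⟨Z, Y, hZY⟩ := exists_mul_eq_map_of_det_ne_zero O hϖ hs hlift hdet
  refine ⟨s ^ m • Z, Y, Units.ext ?_⟩
  rw [← hX₀, ← hs, mul_smul_comm, ← smul_mul_assoc] at hZY
  refine Eq.trans (congrArg (· * (X : Matrix n n K)) (Matrix.ext fun i j => ?_)) hZY
  simp [Units.smul_def]

end RowReduction

section Gamma

variable (p : ℕ) [Fact p.Prime] (k : Type*) [Field k] [CharP k p]

theorem natCast_laurentSeries_ne_zero : (p : LaurentSeries (WittVector p k)) ≠ 0 := by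
  rw [← map_natCast (HahnSeries.C : WittVector p k →+* _)]
  exact (map_ne_zero_iff _ HahnSeries.C_injective).2 (WittVector.p_nonzero p k)

theorem natCast_mem_nonZeroDivisors_gammaRing : (p : GammaRing p k) ∈ (GammaRing p k)⁰ := by
  simpa only [map_natCast] using algebraMap_mem_nonZeroDivisors
    (mem_nonZeroDivisors_of_ne_zero (natCast_laurentSeries_ne_zero p k))

theorem natCast_pow_dvd_algebraMap_iff {n : ℕ} {x : LaurentSeries (WittVector p k)} :
    (p : GammaRing p k) ^ n ∣ algebraMap _ (GammaRing p k) x ↔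
      (p : LaurentSeries (WittVector p k)) ^ n ∣ x := by
  simpa only [map_natCast] using
    algebraMap_pow_dvd_algebraMap_iff (π := (p : LaurentSeries (WittVector p k))) (n := n) (x := x)

theorem isUnit_natCast_eRing : IsUnit (p : ERing p k) := by
  simpa only [map_natCast] using
    IsLocalization.map_units (ERing p k) ⟨_, natCast_mem_nonZeroDivisors_gammaRing p k⟩

/-- The subring `𝓔_+ = Γ_+[1/p]` of `𝓔`. -/
def ePlus : Subring (ERing p k) where
  carrier := EPlusSet p k
  mul_mem' := by
    rintro x y ⟨g, i, hg⟩ ⟨h, j, hh⟩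
    exact ⟨g * h, i + j, by rw [map_mul, ← hg, ← hh]; ring⟩
  one_mem' := ⟨1, 0, by simp⟩
  add_mem' := by
    rintro x y ⟨g, i, hg⟩ ⟨h, j, hh⟩
    refine ⟨p ^ j * g + p ^ i * h, i + j, ?_⟩
    rw [map_add, map_mul, map_mul, map_pow, map_pow, map_natCast, ← hg, ← hh]
    ring
  zero_mem' := ⟨0, 0, by simp⟩
  neg_mem' := by
    rintro x ⟨g, i, hg⟩
    exact ⟨-g, i, by rw [map_neg, ← hg]; ring⟩

theorem exists_unit_ePlus_eq_natCast : ∃ s : (ePlus p k)ˣ, ((s : ePlus p k) : ERing p k) = p := by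
  obtain ⟨y, hy⟩ := (isUnit_natCast_eRing p k).exists_right_inv
  have hyS : y ∈ ePlus p k := ⟨1, 1, by rw [pow_one, hy, map_one]⟩
  exact ⟨Units.mkOfMulEqOne (p : ePlus p k) ⟨y, hyS⟩ (Subtype.ext hy), rfl⟩

variable {p k} in
theorem psToE_mem_ePlus (f : PowerSeries (WittVector p k)) : psToE p k f ∈ ePlus p k :=
  ⟨f, 0, by rw [pow_zero, one_mul]⟩

theorem gammaToE_range_inf_ePlus_le : (gammaToE p k).range ⊓ ePlus p k ≤ (psToE p k).range := by
  rintro _ ⟨⟨g, rfl⟩, f, j, hf⟩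
  have hgf : (p : GammaRing p k) ^ j * g = algebraMap _ _ (HahnSeries.ofPowerSeries ℤ _ f) := by
    refine IsFractionRing.injective (GammaRing p k) (ERing p k) ?_
    rwa [map_mul, map_pow, map_natCast]
  have hdvd : HahnSeries.C ((p : WittVector p k) ^ j) ∣ HahnSeries.ofPowerSeries ℤ _ f := by
    rw [map_pow, map_natCast, ← natCast_pow_dvd_algebraMap_iff]
    exact ⟨g, hgf.symm⟩
  obtain ⟨f', rfl⟩ := C_dvd_of_C_dvd_ofPowerSeries hdvd
  refine ⟨f', ((isUnit_natCast_eRing p k).pow j).mul_left_cancel ?_⟩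
  rw [hf, map_mul, map_pow, map_natCast, map_pow, map_natCast]

variable [PerfectRing k p]

theorem ker_hahnSeriesMap_constantCoeff :
    RingHom.ker (hahnSeriesMap WittVector.constantCoeff :
      LaurentSeries (WittVector p k) →+* LaurentSeries k) = Ideal.span {(p : LaurentSeries _)} := by
  rw [ker_hahnSeriesMap WittVector.ker_constantCoeff, map_natCast]

instance isMaximal_span_natCast_laurentSeries :
    (Ideal.span {(p : LaurentSeries (WittVector p k))}).IsMaximal := by
  rw [← ker_hahnSeriesMap_constantCoeff]
  exact RingHom.ker_isMaximal_of_surjective _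
    (hahnSeriesMap_surjective (WittVector.constantCoeff_surjective p))

instance isAdicComplete_span_natCast_gammaRing :
    IsAdicComplete (Ideal.span {(p : GammaRing p k)}) (GammaRing p k) := by
  simpa only [map_natCast] using
    isAdicComplete_span_algebraMap (π := (p : LaurentSeries (WittVector p k)))

instance isMaximal_span_natCast_gammaRing :
    (Ideal.span {(p : GammaRing p k)}).IsMaximal := by
  simpa only [map_natCast] using
    isMaximal_span_algebraMap (π := (p : LaurentSeries (WittVector p k)))

instance isDomain_gammaRing : IsDomain (GammaRing p k) :=
  isDomain_of_isMaximal_span (natCast_mem_nonZeroDivisors_gammaRing p k)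

theorem natCast_gammaRing_ne_zero : (p : GammaRing p k) ≠ 0 :=
  nonZeroDivisors.ne_zero (natCast_mem_nonZeroDivisors_gammaRing p k)

instance isDiscreteValuationRing_gammaRing : IsDiscreteValuationRing (GammaRing p k) :=
  isDiscreteValuationRing_of_isMaximal_span (natCast_gammaRing_ne_zero p k)

theorem irreducible_natCast_gammaRing : Irreducible (p : GammaRing p k) :=
  irreducible_of_isMaximal_span (natCast_gammaRing_ne_zero p k)

theorem psToE_injective : Function.Injective (psToE p k) := by
  have : IsHausdorff (Ideal.span {(p : WittVector p k)}) (WittVector p k) :=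
    WittVector.isAdicCompleteIdealSpanP.toIsHausdorff
  have : IsHausdorff (Ideal.span {(p : LaurentSeries (WittVector p k))})
      (LaurentSeries (WittVector p k)) := by
    simpa only [map_natCast] using
      isHausdorff_span_hahnSeries_C (Γ := ℤ) (a := (p : WittVector p k))
  refine (IsFractionRing.injective (GammaRing p k) (ERing p k)).comp
    (Function.Injective.comp (fun x y h => ?_) HahnSeries.ofPowerSeries_injective)
  exact AdicCompletion.of_injective _ _ h

/-- The reduction `Γ → k((u))` modulo `p`. -/
def gammaResidue : GammaRing p k →+* LaurentSeries k :=
  (Ideal.Quotient.lift _ (hahnSeriesMap WittVector.constantCoeff)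
    (ker_hahnSeriesMap_constantCoeff p k).ge).comp (AdicCompletion.evalOneₐ _).toRingHom

theorem gammaResidue_algebraMap (x : LaurentSeries (WittVector p k)) :
    gammaResidue p k (algebraMap _ _ x) = hahnSeriesMap WittVector.constantCoeff x := by
  rw [gammaResidue, RingHom.comp_apply, AlgHom.toRingHom_eq_coe, RingHom.coe_coe, AlgHom.commutes]
  rfl

instance isLocalHom_gammaResidue : IsLocalHom (gammaResidue p k) where
  map_nonunit x hx := by
    refine isUnit_of_not_dvd_of_isMaximal_span (π := (p : GammaRing p k)) fun ⟨y, hxy⟩ => ?_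
    rw [hxy, map_mul, map_natCast, ← map_natCast (HahnSeries.C : k →+* _), CharP.cast_eq_zero,
      map_zero, zero_mul] at hx
    exact not_isUnit_zero hx

theorem exists_gammaResidue_eq_ofPowerSeries (g : PowerSeries k) :
    ∃ x : GammaRing p k, gammaResidue p k x = HahnSeries.ofPowerSeries ℤ k g ∧
      gammaToE p k x ∈ ePlus p k := by
  obtain ⟨f, rfl⟩ := PowerSeries.map_surjective _ (WittVector.constantCoeff_surjective p) g
  refine ⟨algebraMap _ _ (HahnSeries.ofPowerSeries ℤ _ f), ?_, psToE_mem_ePlus f⟩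
  rw [gammaResidue_algebraMap, hahnSeriesMap_ofPowerSeries]

theorem exists_map_ePlus_mul_eq_map_gammaToE {n : Type*} [Fintype n] [DecidableEq n]
    (X : GL n (ERing p k)) :
    ∃ (Z : GL n (ePlus p k)) (Y : GL n (GammaRing p k)),
      Matrix.GeneralLinearGroup.map (ePlus p k).subtype Z * X =
        Matrix.GeneralLinearGroup.map (gammaToE p k) Y := by
  obtain ⟨s, hs⟩ := exists_unit_ePlus_eq_natCast p k
  exact exists_map_mul_eq_map (ρ := gammaResidue p k) (PowerSeries k)
    (irreducible_natCast_gammaRing p k) (hs.trans (map_natCast (gammaToE p k) p).symm)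
    (exists_gammaResidue_eq_ofPowerSeries p k) X

end Gamma

section TwistDefect

theorem eq_zero_of_map_X_mul {R E : Type*} [CommRing R] [CommRing E] {ι : PowerSeries R →+* E}
    (hι : Function.Injective ι) {D : PowerSeries R →+ E} {t : PowerSeries R}
    (ht : PowerSeries.X ∣ t) (hC : ∀ a, D (PowerSeries.C a) = 0)
    (hX : ∀ f, D (PowerSeries.X * f) = ι t * D f) (hD : ∀ f, D f ∈ ι.range) : D = 0 := by
  have hdvd (n : ℕ) : ∀ f, ∃ h, ι (PowerSeries.X ^ n * h) = D f := by
    induction n with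
    | zero => simpa only [pow_zero, one_mul, RingHom.mem_range] using hD
    | succ n ih =>
      intro f
      obtain ⟨h, hh⟩ := ih (PowerSeries.mk fun i => PowerSeries.coeff (i + 1) f)
      obtain ⟨s, rfl⟩ := ht
      refine ⟨s * h, ?_⟩
      rw [PowerSeries.eq_X_mul_shift_add_const f, map_add, hC, add_zero, hX, ← hh, ← map_mul]
      ring_nf
  ext f
  obtain ⟨g, hg⟩ := hD f
  have hg₀ : g = 0 := isHausdorff_span_singleton_iff.1
    (inferInstance : IsHausdorff (Ideal.span {PowerSeries.X}) (PowerSeries R)) g fun n =>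
      let ⟨h, hh⟩ := hdvd n f
      ⟨h, hι (hg.trans hh.symm)⟩
  rw [← hg, hg₀, map_zero, AddMonoidHom.zero_apply]

variable {E : Type*} [CommRing E] (σ : E →+* E) (d : E →+ E) (c : E)

/-- The defect `d ∘ σ − c · σ ∘ d` of the relation `d (σ x) = c * σ (d x)`. When `d` satisfies the
Leibniz rule it is a derivation along `σ`, so it is determined by its values on generators. -/
def twistDefect : E →+ E :=
  d.comp (σ : E →+ E) - (AddMonoidHom.mulLeft c).comp ((σ : E →+ E).comp d)

theorem twistDefect_apply (x : E) : twistDefect σ d c x = d (σ x) - c * σ (d x) :=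
  rfl

variable {σ d c}

theorem map_pow_of_leibniz (hd : ∀ x y, d (x * y) = x * d y + y * d x) (x : E) (m : ℕ) :
    d (x ^ m) = m * x ^ (m - 1) * d x := by
  have h := (Derivation.mk' d.toIntLinearMap hd).leibniz_pow x m
  rw [smul_eq_mul, nsmul_eq_mul, ← mul_assoc] at h
  exact h

theorem twistDefect_mul (hd : ∀ x y, d (x * y) = x * d y + y * d x) (x y : E) :
    twistDefect σ d c (x * y) = σ x * twistDefect σ d c y + σ y * twistDefect σ d c x := by
  simp only [twistDefect_apply, map_mul, hd, map_add]
  ring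

theorem twistDefect_eq_zero_of_mul (hd : ∀ x y, d (x * y) = x * d y + y * d x) {a x : E}
    (ha : IsUnit a) (ha₀ : twistDefect σ d c a = 0)
    (hax : twistDefect σ d c (a * x) = 0) : twistDefect σ d c x = 0 := by
  rwa [twistDefect_mul hd, ha₀, mul_zero, add_zero, (ha.map σ).mul_right_eq_zero] at hax

end TwistDefect

section DerivFrobenius

variable {p : ℕ} [Fact p.Prime] {k : Type*} [Field k] [CharP k p]

theorem psToE_X : psToE p k PowerSeries.X = uE p k := by
  rw [uE, RingHom.comp_apply, HahnSeries.ofPowerSeries_X]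

theorem psToE_C (a : WittVector p k) : psToE p k (PowerSeries.C a) = wittToE p k a := by
  rw [RingHom.comp_apply, HahnSeries.ofPowerSeries_C]
  rfl

variable {σ : ERing p k →+* ERing p k} {d : ERing p k →+ ERing p k} {c : ERing p k}

theorem twistDefect_uE (hd : ∀ x y, d (x * y) = x * d y + y * d x)
    (hσu : σ (uE p k) = uE p k ^ p) (hdu : d (uE p k) = 1)
    (hc : c = (p : ERing p k) * uE p k ^ (p - 1)) : twistDefect σ d c (uE p k) = 0 := by
  rw [twistDefect_apply, hσu, hdu, map_one, map_pow_of_leibniz hd, hdu, hc, sub_self]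

theorem twistDefect_wittToE
    (hσO : ∀ a : WittVector p k, σ (wittToE p k a) = wittToE p k (WittVector.frobenius a))
    (hdO : ∀ a : WittVector p k, d (wittToE p k a) = 0) (a : WittVector p k) :
    twistDefect σ d c (wittToE p k a) = 0 := by
  rw [twistDefect_apply, hσO, hdO, hdO, map_zero, mul_zero, sub_zero]

variable [PerfectRing k p]

theorem twistDefect_psToE (hd : ∀ x y, d (x * y) = x * d y + y * d x)
    (hσu : σ (uE p k) = uE p k ^ p)
    (hσΓp : Set.MapsTo σ (GammaPlusSet p k) (GammaPlusSet p k))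
    (hdΓp : Set.MapsTo d (GammaPlusSet p k) (GammaPlusSet p k)) (hc : c ∈ GammaPlusSet p k)
    (hu : twistDefect σ d c (uE p k) = 0) (hO : ∀ a, twistDefect σ d c (wittToE p k a) = 0)
    (f : PowerSeries (WittVector p k)) : twistDefect σ d c (psToE p k f) = 0 := by
  have hD : (twistDefect σ d c).comp
      (psToE p k : PowerSeries (WittVector p k) →+ ERing p k) = 0 := by
    refine eq_zero_of_map_X_mul (psToE_injective p k)
      (dvd_pow_self PowerSeries.X (Fact.out : p.Prime).ne_zero) (fun a => ?_) (fun f => ?_)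
      fun f => ?_
    · exact (congrArg _ (psToE_C a)).trans (hO a)
    · change twistDefect σ d c (psToE p k (PowerSeries.X * f)) =
        _ * twistDefect σ d c (psToE p k f)
      rw [map_mul, psToE_X, twistDefect_mul hd, hu, mul_zero, add_zero, hσu, map_pow, psToE_X]
    · have hf : psToE p k f ∈ GammaPlusSet p k := ⟨f, rfl⟩
      exact (psToE p k).range.sub_mem (hdΓp (hσΓp hf))
        ((psToE p k).range.mul_mem hc (hσΓp (hdΓp hf)))
  exact DFunLike.congr_fun hD f

theorem twistDefect_eq_zero_of_mem_ePlus (hd : ∀ x y, d (x * y) = x * d y + y * d x)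
    (hσu : σ (uE p k) = uE p k ^ p)
    (hσO : ∀ a : WittVector p k, σ (wittToE p k a) = wittToE p k (WittVector.frobenius a))
    (hσΓp : Set.MapsTo σ (GammaPlusSet p k) (GammaPlusSet p k))
    (hdu : d (uE p k) = 1) (hdO : ∀ a : WittVector p k, d (wittToE p k a) = 0)
    (hdΓp : Set.MapsTo d (GammaPlusSet p k) (GammaPlusSet p k))
    (hc : c = (p : ERing p k) * uE p k ^ (p - 1)) {x : ERing p k} (hx : x ∈ ePlus p k) :
    twistDefect σ d c x = 0 := by
  have hcΓp : c ∈ GammaPlusSet p k :=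
    ⟨(p : PowerSeries (WittVector p k)) * PowerSeries.X ^ (p - 1), by
      rw [map_mul, map_natCast, map_pow, psToE_X, hc]⟩
  obtain ⟨f, j, hf⟩ := hx
  have hpow : (p : ERing p k) ^ j = wittToE p k (p ^ j) := by rw [map_pow, map_natCast]
  have hδO := twistDefect_wittToE (c := c) hσO hdO
  refine twistDefect_eq_zero_of_mul hd ((isUnit_natCast_eRing p k).pow j)
    (hpow ▸ hδO (p ^ j)) ?_
  rw [hf]
  exact twistDefect_psToE hd hσu hσΓp hdΓp hcΓp (twistDefect_uE hd hσu hdu hc) hδO f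

end DerivFrobenius

section DieudonneMatrices

variable {n E : Type*}

theorem matrix_mul_map_of_leibniz [Fintype n] [CommRing E] {d : E →+ E}
    (hd : ∀ x y, d (x * y) = x * d y + y * d x) (A B : Matrix n n E) :
    (A * B).map d = A.map d * B + A * B.map d := by
  ext i j
  simp only [Matrix.map_apply, Matrix.mul_apply, Matrix.add_apply, map_sum, hd,
    ← Finset.sum_add_distrib]
  exact Finset.sum_congr rfl fun l _ => by ring

/-- The matrices, in a basis, of the Frobenius, the Verschiebung and the connection (in the
direction `d / du`) of a finite free Dieudonné module with coefficients in `E`. -/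
structure DieudonneMatrices (n E : Type*) where
  F : Matrix n n E
  V : Matrix n n E
  N : Matrix n n E

namespace DieudonneMatrices

/-- The matrices of `M` have entries in `S`, i.e. `M` is defined over `S`. -/
def HasEntries (S : Set E) (M : DieudonneMatrices n E) : Prop :=
  M.F ∈ S.matrix ∧ M.V ∈ S.matrix ∧ M.N ∈ S.matrix

theorem HasEntries.mono {M : DieudonneMatrices n E} {S T : Set E} (hM : M.HasEntries S)
    (hST : S ⊆ T) : M.HasEntries T :=
  ⟨fun i j => hST (hM.1 i j), fun i j => hST (hM.2.1 i j), fun i j => hST (hM.2.2 i j)⟩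

variable [Fintype n] [CommRing E]

/-- `P` is the matrix of a morphism `M → M'`: it commutes with `F`, the connections and `V`. -/
structure IsHom (σ : E →+* E) (d : E →+ E) (P : Matrix n n E) (M M' : DieudonneMatrices n E) :
    Prop where
  mul_F : P * M.F = M'.F * P.map σ
  horizontal : P.map d + M'.N * P = P * M.N
  V_mul : M'.V * P = P.map σ * M.V

variable {σ : E →+* E} {d : E →+ E} {c q : E} {M M' M'' : DieudonneMatrices n E}

theorem IsHom.comp (hd : ∀ x y, d (x * y) = x * d y + y * d x) {P Q : Matrix n n E}
    (hQ : IsHom σ d Q M' M'') (hP : IsHom σ d P M M') : IsHom σ d (Q * P) M M'' where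
  mul_F := by rw [Matrix.map_mul, mul_assoc, hP.mul_F, ← mul_assoc, hQ.mul_F, mul_assoc]
  horizontal := by
    rw [matrix_mul_map_of_leibniz hd, add_right_comm, ← mul_assoc, ← add_mul, hQ.horizontal,
      mul_assoc, ← mul_add, add_comm, hP.horizontal, mul_assoc]
  V_mul := by rw [Matrix.map_mul, ← mul_assoc, hQ.V_mul, mul_assoc, hP.V_mul, mul_assoc]

theorem IsHom.map_horizontal {P : Matrix n n E} (h : IsHom σ d P M M') :
    (P.map d).map σ + M'.N.map σ * P.map σ = P.map σ * M.N.map σ := by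
  rw [← Matrix.map_mul, ← Matrix.map_mul, ← h.horizontal]
  exact (Matrix.map_add σ (map_add σ) _ _).symm

variable [DecidableEq n]

/-- The identities making `M` a Dieudonné module: `F V = V F = q` and horizontality of `F` and `V`.
Pulling the connection back along `σ` multiplies it by `c = dσ(u) / du`. -/
structure IsDieudonne (σ : E →+* E) (d : E →+ E) (c q : E) (M : DieudonneMatrices n E) : Prop where
  F_mul_V : M.F * M.V = q • 1
  V_mul_F : M.V * M.F = q • 1
  F_horizontal : M.F.map d + M.N * M.F = c • (M.F * M.N.map σ)
  V_horizontal : M.V.map d + c • (M.N.map σ * M.V) = M.V * M.N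

/-- The matrices of `M` after the change of basis `Z`. -/
def gauge (σ : E →+* E) (d : E →+ E) (Z : GL n E) (M : DieudonneMatrices n E) :
    DieudonneMatrices n E where
  F := Z * M.F * ((Matrix.GeneralLinearGroup.map σ Z)⁻¹ : GL n E)
  V := Matrix.GeneralLinearGroup.map σ Z * M.V * (Z⁻¹ : GL n E)
  N := (Z * M.N - (Z : Matrix n n E).map d) * (Z⁻¹ : GL n E)

theorem isHom_gauge (Z : GL n E) : IsHom σ d (Z : Matrix n n E) M (M.gauge σ d Z) where
  mul_F := (Units.inv_mul_cancel_right (Z * M.F) (Matrix.GeneralLinearGroup.map σ Z)).symm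
  horizontal := by rw [gauge, Units.inv_mul_cancel_right, add_sub_cancel]
  V_mul := Units.inv_mul_cancel_right _ Z

theorem IsHom.eq_gauge {Z : GL n E} (h : IsHom σ d (Z : Matrix n n E) M M') :
    M' = M.gauge σ d Z := by
  have hF : M'.F = (M.gauge σ d Z).F :=
    (Units.eq_mul_inv_iff_mul_eq (Matrix.GeneralLinearGroup.map σ Z)).2 h.mul_F.symm
  have hV : M'.V = (M.gauge σ d Z).V := (Units.eq_mul_inv_iff_mul_eq Z).2 h.V_mul
  have hN : M'.N = (M.gauge σ d Z).N :=
    (Units.eq_mul_inv_iff_mul_eq Z).2 (eq_sub_of_add_eq' h.horizontal)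
  cases M'
  exact (mk.injEq ..).mpr ⟨hF, hV, hN⟩

theorem IsHom.F_horizontal (hd : ∀ x y, d (x * y) = x * d y + y * d x) {Z : GL n E}
    (hZ : IsHom σ d (Z : Matrix n n E) M M')
    (hσd : ((Z : Matrix n n E).map σ).map d = c • ((Z : Matrix n n E).map d).map σ)
    (hM : M.F.map d + M.N * M.F = c • (M.F * M.N.map σ)) :
    M'.F.map d + M'.N * M'.F = c • (M'.F * M'.N.map σ) := by
  have hF : ((Z : Matrix n n E) * M.F).map d = (M'.F * (Z : Matrix n n E).map σ).map d := by
    rw [hZ.mul_F]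
  simp only [matrix_mul_map_of_leibniz hd] at hF
  refine (Matrix.GeneralLinearGroup.map σ Z).isUnit.mul_right_cancel ?_
  change (M'.F.map d + M'.N * M'.F) * (Z : Matrix n n E).map σ =
    c • (M'.F * M'.N.map σ) * (Z : Matrix n n E).map σ
  linear_combination (norm := (simp only [mul_add, add_mul, smul_add, mul_smul_comm,
      smul_mul_assoc, mul_assoc]; abel))
    (Z : Matrix n n E) * hM + hZ.horizontal * M.F - hF - M'.F * hσd - M'.N * hZ.mul_F
      - c • (M'.F * hZ.map_horizontal) + c • (hZ.mul_F * M.N.map σ)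

theorem IsHom.V_horizontal (hd : ∀ x y, d (x * y) = x * d y + y * d x) {Z : GL n E}
    (hZ : IsHom σ d (Z : Matrix n n E) M M')
    (hσd : ((Z : Matrix n n E).map σ).map d = c • ((Z : Matrix n n E).map d).map σ)
    (hM : M.V.map d + c • (M.N.map σ * M.V) = M.V * M.N) :
    M'.V.map d + c • (M'.N.map σ * M'.V) = M'.V * M'.N := by
  have hV : (M'.V * (Z : Matrix n n E)).map d = ((Z : Matrix n n E).map σ * M.V).map d := by
    rw [hZ.V_mul]
  simp only [matrix_mul_map_of_leibniz hd] at hV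
  refine Z.isUnit.mul_right_cancel ?_
  linear_combination (norm := (simp only [mul_add, add_mul, smul_add, mul_smul_comm,
      smul_mul_assoc, mul_assoc]; abel))
    (Z : Matrix n n E).map σ * hM + hV + hσd * M.V - M'.V * hZ.horizontal - hZ.V_mul * M.N
      + c • (hZ.map_horizontal * M.V) + c • (M'.N.map σ * hZ.V_mul)

theorem IsHom.isDieudonne (hd : ∀ x y, d (x * y) = x * d y + y * d x) {Z : GL n E}
    (hZ : IsHom σ d (Z : Matrix n n E) M M')
    (hσd : ((Z : Matrix n n E).map σ).map d = c • ((Z : Matrix n n E).map d).map σ)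
    (hM : IsDieudonne σ d c q M) : IsDieudonne σ d c q M' where
  F_mul_V := by
    refine Z.isUnit.mul_right_cancel ?_
    rw [mul_assoc, hZ.V_mul, ← mul_assoc, ← hZ.mul_F, mul_assoc, hM.F_mul_V, mul_smul_comm,
      mul_one, smul_one_mul]
  V_mul_F := by
    refine (Matrix.GeneralLinearGroup.map σ Z).isUnit.mul_right_cancel ?_
    change M'.V * M'.F * (Z : Matrix n n E).map σ = q • 1 * (Z : Matrix n n E).map σ
    rw [mul_assoc, ← hZ.mul_F, ← mul_assoc, hZ.V_mul, mul_assoc, hM.V_mul_F, mul_smul_comm,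
      mul_one, smul_one_mul]
  F_horizontal := hZ.F_horizontal hd hσd hM.F_horizontal
  V_horizontal := hZ.V_horizontal hd hσd hM.V_horizontal

theorem HasEntries.gauge {S : Subring E} (hσ : Set.MapsTo σ S S) (hd : Set.MapsTo d S S)
    (hM : M.HasEntries (S : Set E)) {Z : GL n E} (hZ : (Z : Matrix n n E) ∈ (S : Set E).matrix)
    (hZi : ((Z⁻¹ : GL n E) : Matrix n n E) ∈ (S : Set E).matrix) :
    (M.gauge σ d Z).HasEntries (S : Set E) := by
  have hσZ : (Z : Matrix n n E).map σ ∈ S.matrix := fun i j => hσ (hZ i j)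
  have hσZi : ((Z⁻¹ : GL n E) : Matrix n n E).map σ ∈ S.matrix := fun i j => hσ (hZi i j)
  have hdZ : (Z : Matrix n n E).map d ∈ S.matrix := fun i j => hd (hZ i j)
  obtain ⟨hF, hV, hN⟩ := hM
  refine ⟨S.matrix.mul_mem (S.matrix.mul_mem hZ hF) ?_,
    S.matrix.mul_mem (S.matrix.mul_mem hσZ hV) hZi,
    S.matrix.mul_mem (S.matrix.sub_mem (S.matrix.mul_mem hZ hN) hdZ) hZi⟩
  rwa [← map_inv]

variable {M₁ M₂ : DieudonneMatrices n E}

theorem exists_isHom_hasEntries_inf (hd : ∀ x y, d (x * y) = x * d y + y * d x) {S T : Subring E}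
    (hσS : Set.MapsTo σ S S) (hdS : Set.MapsTo d S S) (hM₁ : M₁.HasEntries (S : Set E))
    (hσT : Set.MapsTo σ T T) (hdT : Set.MapsTo d T T) (hM₂ : M₂.HasEntries (T : Set E))
    {X Y Z : GL n E} (hX : IsHom σ d (X : Matrix n n E) M₁ M₂) (hZX : Z * X = Y)
    (hY : (Y : Matrix n n E) ∈ (S : Set E).matrix ∧
      ((Y⁻¹ : GL n E) : Matrix n n E) ∈ (S : Set E).matrix)
    (hZ : (Z : Matrix n n E) ∈ (T : Set E).matrix ∧
      ((Z⁻¹ : GL n E) : Matrix n n E) ∈ (T : Set E).matrix) :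
    ∃ M : DieudonneMatrices n E, M.HasEntries ((S ⊓ T : Subring E) : Set E) ∧
      IsHom σ d (Y : Matrix n n E) M₁ M ∧ IsHom σ d (Z : Matrix n n E) M₂ M := by
  have hYM : IsHom σ d (Y : Matrix n n E) M₁ (M₂.gauge σ d Z) := by
    rw [← hZX]
    exact (isHom_gauge Z).comp hd hX
  obtain ⟨hTF, hTV, hTN⟩ := hM₂.gauge hσT hdT hZ.1 hZ.2
  obtain ⟨hSF, hSV, hSN⟩ := hYM.eq_gauge ▸ hM₁.gauge hσS hdS hY.1 hY.2
  exact ⟨M₂.gauge σ d Z, ⟨fun i j => ⟨hSF i j, hTF i j⟩, fun i j => ⟨hSV i j, hTV i j⟩,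
    fun i j => ⟨hSN i j, hTN i j⟩⟩, hYM, isHom_gauge Z⟩

end DieudonneMatrices

theorem coe_map_mem_matrix {n A E : Type*} [Fintype n] [DecidableEq n] [CommRing A] [CommRing E]
    {f : A →+* E} {S : Set E} (hf : ∀ a, f a ∈ S) (Y : GL n A) :
    (Matrix.GeneralLinearGroup.map f Y : Matrix n n E) ∈ S.matrix ∧
      (((Matrix.GeneralLinearGroup.map f Y)⁻¹ : GL n E) : Matrix n n E) ∈ S.matrix := by
  rw [← map_inv]
  exact ⟨fun i j => hf (Y i j), fun i j => hf ((Y⁻¹ : GL n A) i j)⟩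

end DieudonneMatrices

theorem statement5 (p : ℕ) [Fact p.Prime] (k : Type*) [Field k] [CharP k p]
    [PerfectRing k p]
    -- the Frobenius lift `σ` on `𝓔` (with `f = 1`, `q = p`):
    (σ : ERing p k →+* ERing p k)
    (hσu : σ (uE p k) = uE p k ^ p)
    (hσO : ∀ a : WittVector p k, σ (wittToE p k a) = wittToE p k (WittVector.frobenius a))
    (hσΓ : Set.MapsTo σ (GammaSet p k) (GammaSet p k))
    (hσΓp : Set.MapsTo σ (GammaPlusSet p k) (GammaPlusSet p k))
    (hσEp : Set.MapsTo σ (EPlusSet p k) (EPlusSet p k))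
    -- the derivation `d = d/du` on `𝓔`:
    (d : Derivation ℤ (ERing p k) (ERing p k))
    (hdu : d (uE p k) = 1)
    (hdO : ∀ a : WittVector p k, d (wittToE p k a) = 0)
    (hdΓ : Set.MapsTo d (GammaSet p k) (GammaSet p k))
    (hdΓp : Set.MapsTo d (GammaPlusSet p k) (GammaPlusSet p k))
    (hdEp : Set.MapsTo d (EPlusSet p k) (EPlusSet p k))
    -- `c = dσ(u)/du = p·u^{p−1}`:
    (c : ERing p k) (hc : c = (p : ERing p k) * uE p k ^ (p - 1))
    -- `M₁`, a Dieudonné module over `Γ` of rank `n`: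
    (n : ℕ) (Φ₁ B₁ N₁ : Matrix (Fin n) (Fin n) (ERing p k))
    (hM₁mem : (∀ i j, Φ₁ i j ∈ GammaSet p k) ∧ (∀ i j, B₁ i j ∈ GammaSet p k) ∧
      (∀ i j, N₁ i j ∈ GammaSet p k))
    (hM₁FV : Φ₁ * B₁ = (p : ERing p k) • 1 ∧ B₁ * Φ₁ = (p : ERing p k) • 1)
    (hM₁Fcompat : Φ₁.map ⇑d + N₁ * Φ₁ = c • (Φ₁ * N₁.map ⇑σ))
    (hM₁Vcompat : B₁.map ⇑d + c • (N₁.map ⇑σ * B₁) = B₁ * N₁)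
    -- `M₂`, a Dieudonné module over `𝓔_+` of rank `n`:
    (Φ₂ B₂ N₂ : Matrix (Fin n) (Fin n) (ERing p k))
    (hM₂mem : (∀ i j, Φ₂ i j ∈ EPlusSet p k) ∧ (∀ i j, B₂ i j ∈ EPlusSet p k) ∧
      (∀ i j, N₂ i j ∈ EPlusSet p k))
    (hM₂FV : Φ₂ * B₂ = (p : ERing p k) • 1 ∧ B₂ * Φ₂ = (p : ERing p k) • 1)
    (hM₂Fcompat : Φ₂.map ⇑d + N₂ * Φ₂ = c • (Φ₂ * N₂.map ⇑σ))
    (hM₂Vcompat : B₂.map ⇑d + c • (N₂.map ⇑σ * B₂) = B₂ * N₂)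
    -- `M₁ ⊗_Γ 𝓔 ≅ M₂ ⊗_{𝓔_+} 𝓔` as Dieudonné modules over `𝓔`, via `X`:
    (X Xi : Matrix (Fin n) (Fin n) (ERing p k))
    (hX : X * Xi = 1 ∧ Xi * X = 1)
    (hXF : X * Φ₁ = Φ₂ * X.map ⇑σ)
    (hXnabla : X.map ⇑d + N₂ * X = X * N₁)
    (hXV : B₂ * X = X.map ⇑σ * B₁) :
    -- then there is a Dieudonné module `M_+` over `Γ_+` ...
    ∃ Φp Bp Np : Matrix (Fin n) (Fin n) (ERing p k),
      ((∀ i j, Φp i j ∈ GammaPlusSet p k) ∧ (∀ i j, Bp i j ∈ GammaPlusSet p k) ∧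
        (∀ i j, Np i j ∈ GammaPlusSet p k)) ∧
      (Φp * Bp = (p : ERing p k) • 1 ∧ Bp * Φp = (p : ERing p k) • 1) ∧
      Φp.map ⇑d + Np * Φp = c • (Φp * Np.map ⇑σ) ∧
      Bp.map ⇑d + c • (Np.map ⇑σ * Bp) = Bp * Np ∧
      -- ... with `M₁ ≅ M_+ ⊗_{Γ_+} Γ` as Dieudonné modules over `Γ` (via `Y`) ...
      (∃ Y Yi : Matrix (Fin n) (Fin n) (ERing p k),
        (Y * Yi = 1 ∧ Yi * Y = 1) ∧
        (∀ i j, Y i j ∈ GammaSet p k) ∧ (∀ i j, Yi i j ∈ GammaSet p k) ∧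
        Y * Φ₁ = Φp * Y.map ⇑σ ∧
        Y.map ⇑d + Np * Y = Y * N₁ ∧
        Bp * Y = Y.map ⇑σ * B₁) ∧
      -- ... and `M₂ ≅ M_+ ⊗_{Γ_+} 𝓔_+` as Dieudonné modules over `𝓔_+` (via `Z`).
      (∃ Z Zi : Matrix (Fin n) (Fin n) (ERing p k),
        (Z * Zi = 1 ∧ Zi * Z = 1) ∧
        (∀ i j, Z i j ∈ EPlusSet p k) ∧ (∀ i j, Zi i j ∈ EPlusSet p k) ∧
        Z * Φ₂ = Φp * Z.map ⇑σ ∧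
        Z.map ⇑d + Np * Z = Z * N₂ ∧
        Bp * Z = Z.map ⇑σ * B₂) := by
  -- The general lemmas take an additive map with a Leibniz rule, because for a localization
  -- `Algebra ℤ` is found as `OreLocalization.instAlgebra`, not as the one of a general ring.
  let δ : ERing p k →+ ERing p k := d.toLinearMap.toAddMonoidHom
  have hδ : ∀ x y, δ (x * y) = x * δ y + y * δ x := d.leibniz
  obtain ⟨Z, Y, hZY⟩ := exists_map_ePlus_mul_eq_map_gammaToE p k ⟨X, Xi, hX.1, hX.2⟩
  have hY := coe_map_mem_matrix (S := GammaSet p k) Set.mem_range_self Y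
  have hZ := coe_map_mem_matrix (f := (ePlus p k).subtype) (S := EPlusSet p k) Subtype.property Z
  obtain ⟨M, hM, hYM, hZM⟩ := DieudonneMatrices.exists_isHom_hasEntries_inf
    (S := (gammaToE p k).range) (T := ePlus p k) (M₁ := ⟨Φ₁, B₁, N₁⟩) (M₂ := ⟨Φ₂, B₂, N₂⟩)
    hδ hσΓ hdΓ hM₁mem hσEp hdEp hM₂mem ⟨hXF, hXnabla, hXV⟩ hZY hY hZ
  have hMΓp : M.HasEntries (GammaPlusSet p k) := hM.mono (gammaToE_range_inf_ePlus_le p k)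
  have hM : M.IsDieudonne σ δ c p :=
    hZM.isDieudonne hδ
      (Matrix.ext fun i j => sub_eq_zero.1 <|
        twistDefect_eq_zero_of_mem_ePlus hδ hσu hσO hσΓp hdu hdO hdΓp hc (Z i j).2)
      ⟨hM₂FV.1, hM₂FV.2, hM₂Fcompat, hM₂Vcompat⟩
  exact ⟨M.F, M.V, M.N, hMΓp, ⟨hM.F_mul_V, hM.V_mul_F⟩, hM.F_horizontal, hM.V_horizontal,
    ⟨_, _, ⟨Units.mul_inv _, Units.inv_mul _⟩, hY.1, hY.2, hYM.mul_F, hYM.horizontal, hYM.V_mul⟩,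
    ⟨_, _, ⟨Units.mul_inv _, Units.inv_mul _⟩, hZ.1, hZ.2, hZM.mul_F, hZM.horizontal, hZM.V_mul⟩⟩
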